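/- Define, for n ≥ 0, C_n := 2(α+β+n+3/2)·k²·(β_n+β_{n+1}) − 2[(β+n+1/2)k² + (α+n+1/2)] − 4k²·p1(n). Then for every integer n ≥ 2 one has the generalized Rees difference equation β_{n−1}·C_{n−2} = β_n·C_n + 1. -/

import Mathlib

open MeasureTheory

/-- The quantity `C_n` appearing in the generalized Rees difference equation. -/
noncomputable def Caux (α β k2 : ℝ) (b p1 : ℕ → ℝ) (n : ℕ) : ℝ :=
  2 * (α + β + (n:ℝ) + 3/2) * k2 * (b n + b (n + 1))
    - 2 * ((β + (n:ℝ) + 1/2) * k2 + (α + (n:ℝ) + 1/2))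
    - 4 * k2 * p1 n

/-!
The weight satisfies a Pearson equation `(σ w)' = 2 τ w` with `σ = (1 - x²)(1 - k²x²)`, so
`D = σ d/dx + τ` is antisymmetric for the inner product `⟨f, g⟩ = ∫ f g w`. Since `[D, x] = σ`, the
diagonal entries of `σ` in the basis `P n` are determined by the recurrence coefficients and the
entries `⟨P (n + 1), D (P n)⟩`. The latter are read off from the coefficients of `x ^ (n + 3)` and
`x ^ (n + 1)` in `D (P n)`. Divided by `h (n + 1)` and doubled, such an entry equals `C_n`, and also
`C_{n+1}`, up to affine expressions in the `β_j`. In the diagonal identity these expressions cancel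
against the entry of `σ` except for the constant `1`, which is the Rees equation.
-/

namespace ReesEquation

open Polynomial Set

section PearsonOperator

variable {R : Type*} [CommRing R]

/-- The operator `σ d/dx + τ` on polynomials. -/
noncomputable def pearsonOp (σ τ f : R[X]) : R[X] := σ * derivative f + τ * f

/-- The distributional Pearson equation `(σ L)' = 2 τ L` for a linear functional `L`. The factor `2`
makes `pearsonOp σ τ` antisymmetric for the bilinear form `(f, g) ↦ L (f * g)`. -/
def IsPearson (L : R[X] →ₗ[R] R) (σ τ : R[X]) : Prop :=
  ∀ f, L (σ * derivative f + 2 * τ * f) = 0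

variable {L : R[X] →ₗ[R] R} {σ τ : R[X]}

lemma pearsonOp_X_mul (σ τ f : R[X]) :
    pearsonOp σ τ (X * f) = X * pearsonOp σ τ f + σ * f := by
  simp only [pearsonOp, derivative_mul, derivative_X]
  ring

lemma IsPearson.map_mul_pearsonOp_comm (hL : IsPearson L σ τ) (f g : R[X]) :
    L (f * pearsonOp σ τ g) = -L (g * pearsonOp σ τ f) := by
  rw [eq_neg_iff_add_eq_zero, ← map_add, ← hL (f * g)]
  congr 1
  simp only [pearsonOp, derivative_mul]
  ring

lemma IsPearson.map_mul_mul_self (hL : IsPearson L σ τ) (f : R[X]) :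
    L (σ * (f * f)) = -2 * L (X * f * pearsonOp σ τ f) := by
  have hcomm : σ * (f * f) = f * pearsonOp σ τ (X * f) - X * f * pearsonOp σ τ f := by
    rw [pearsonOp_X_mul]
    ring
  rw [hcomm, map_sub, hL.map_mul_pearsonOp_comm]
  ring

end PearsonOperator

section OrthogonalPolynomials

variable {R : Type*} [CommRing R]

/-- `P` is a sequence of monic polynomials, orthogonal for the functional `L`, with square norms
`h n` and with recurrence coefficients `b n` that have no diagonal part, as for an even weight. In
the recurrence at `n = 0` the term `P (0 - 1) = P 0` is multiplied by `b 0 = 0`. -/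
structure IsSymmetricMonicOrthogonal (L : R[X] →ₗ[R] R) (P : Sequence R) (h b : ℕ → R) :
    Prop where
  monic : ∀ n, (P n).Monic
  map_mul : ∀ m n, L (P m * P n) = if m = n then h n else 0
  recurrence_zero : b 0 = 0
  X_mul : ∀ n, X * P n = P (n + 1) + C (b n) * P (n - 1)

/-- The coefficient of `x ^ (n - 2)` in `P n`, read off from `X ^ 2 * P n` so that it vanishes
for `n < 2`. -/
noncomputable def subleadingCoeff (P : ℕ → R[X]) (n : ℕ) : R := (X ^ 2 * P n).coeff n

lemma subleadingCoeff_zero (P : ℕ → R[X]) : subleadingCoeff P 0 = 0 := by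
  simp [subleadingCoeff]

lemma subleadingCoeff_one (P : ℕ → R[X]) : subleadingCoeff P 1 = 0 := by
  simp [subleadingCoeff, coeff_X_pow_mul']

lemma subleadingCoeff_add_two (P : ℕ → R[X]) (n : ℕ) :
    subleadingCoeff P (n + 2) = (P (n + 2)).coeff n :=
  coeff_X_pow_mul _ _ _

lemma coeff_eq_zero_of_lt (P : Sequence R) {n j : ℕ} (hj : n < j) : (P n).coeff j = 0 :=
  coeff_eq_zero_of_natDegree_lt (by rwa [P.natDegree_eq])

lemma map_C_mul (L : R[X] →ₗ[R] R) (a : R) (p : R[X]) : L (C a * p) = a * L p := by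
  rw [C_mul', map_smul, smul_eq_mul]

namespace IsSymmetricMonicOrthogonal

variable {L : R[X] →ₗ[R] R} {P : Sequence R} {h b : ℕ → R}

lemma of_map_X_eq_zero [NoZeroDivisors R] (hmonic : ∀ n, (P n).Monic)
    (hmap : ∀ m n, L (P m * P n) = if m = n then h n else 0) (hLX : L X = 0) (hh : h 0 ≠ 0)
    (hb : b 0 = 0) (hX : ∀ n, 1 ≤ n → X * P n = P (n + 1) + C (b n) * P (n - 1)) :
    IsSymmetricMonicOrthogonal L P h b := by
  have hP0 : P 0 = 1 := (hmonic 0).natDegree_eq_zero.mp (P.natDegree_eq 0)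
  have hL1 : L 1 = h 0 := by simpa [hP0] using hmap 0 0
  have hLP1 : L (P 1) = 0 := by simpa [hP0] using hmap 1 0
  have hP1 : P 1 = X := by
    have hXC : P 1 = X + C ((P 1).coeff 0) := (hmonic 1).eq_X_add_C (P.natDegree_eq 1)
    have hc : (P 1).coeff 0 * h 0 = 0 := by
      rwa [hXC, map_add, hLX, zero_add, ← mul_one (C _), map_C_mul, hL1] at hLP1
    rw [hXC, (mul_eq_zero.mp hc).resolve_right hh, C_0, add_zero]
  refine ⟨hmonic, hmap, hb, fun n => ?_⟩
  rcases n.eq_zero_or_pos with rfl | hn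
  · simp [hP0, hP1, hb]
  · exact hX n hn

lemma coeff_self (hP : IsSymmetricMonicOrthogonal L P h b) (n : ℕ) : (P n).coeff n = 1 := by
  simpa only [P.natDegree_eq] using (hP.monic n).coeff_natDegree

lemma map_mul_self (hP : IsSymmetricMonicOrthogonal L P h b) (n : ℕ) :
    L (P n * P n) = h n := by
  rw [hP.map_mul, if_pos rfl]

lemma map_mul_of_ne (hP : IsSymmetricMonicOrthogonal L P h b) {m n : ℕ} (hmn : m ≠ n) :
    L (P m * P n) = 0 := by
  rw [hP.map_mul, if_neg hmn]

lemma coeff_succ_self (hP : IsSymmetricMonicOrthogonal L P h b) (n : ℕ) :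
    (P (n + 1)).coeff n = 0 := by
  induction n with
  | zero => simpa [hP.recurrence_zero] using (congrArg (coeff · 0) (hP.X_mul 0)).symm
  | succ n ih =>
    have hcoeff := congrArg (coeff · (n + 1)) (hP.X_mul (n + 1))
    simpa [ih, coeff_eq_zero_of_lt P n.lt_succ_self] using hcoeff.symm

lemma subleadingCoeff_succ (hP : IsSymmetricMonicOrthogonal L P h b) (n : ℕ) :
    subleadingCoeff P (n + 1) = subleadingCoeff P n - b n := by
  have hcoeff := congrArg (fun p => (X ^ 2 * p).coeff (n + 1)) (hP.X_mul n)
  have hlower : (X ^ 2 * (C (b n) * P (n - 1))).coeff (n + 1) = b n := by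
    cases n with
    | zero => simp [hP.recurrence_zero]
    | succ n => simp [coeff_X_pow_mul, hP.coeff_self]
  simp only [mul_add, coeff_add, hlower, mul_left_comm _ X, coeff_X_mul] at hcoeff
  exact (sub_eq_of_eq_add hcoeff).symm

lemma map_mul_eq_zero_of_degree_lt (hP : IsSymmetricMonicOrthogonal L P h b) {n : ℕ} {q : R[X]}
    (hq : q.degree < n) : L (P n * q) = 0 := by
  have hspan : Submodule.span R (P '' Iio n) ≤ LinearMap.ker (L ∘ₗ LinearMap.mulLeft R (P n)) := by
    rw [Submodule.span_le]
    rintro _ ⟨m, hm : m < n, rfl⟩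
    exact hP.map_mul_of_ne hm.ne'
  rw [P.span_degreeLT fun i _ => (hP.monic i).leadingCoeff ▸ isUnit_one] at hspan
  exact hspan (mem_degreeLT.mpr hq)

lemma map_mul_of_natDegree_le (hP : IsSymmetricMonicOrthogonal L P h b) {n : ℕ} {q : R[X]}
    (hq : q.natDegree ≤ n + 2) :
    L (P n * q) = (q.coeff n - q.coeff (n + 2) * subleadingCoeff P (n + 2)) * h n := by
  rw [subleadingCoeff_add_two]
  set c := q.coeff n - q.coeff (n + 2) * (P (n + 2)).coeff n with hc
  have hdeg : (q - C (q.coeff (n + 2)) * P (n + 2) - C (q.coeff (n + 1)) * P (n + 1)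
      - C c * P n).degree < n := by
    rw [degree_lt_iff_coeff_zero]
    intro j hj
    simp only [coeff_sub, coeff_C_mul]
    obtain rfl | rfl | rfl | hj : j = n ∨ j = n + 1 ∨ j = n + 2 ∨ n + 2 < j := by omega
    · rw [hP.coeff_succ_self, hP.coeff_self, hc]
      ring
    · rw [hP.coeff_succ_self (n + 1), hP.coeff_self, coeff_eq_zero_of_lt P (by omega)]
      ring
    · rw [hP.coeff_self, coeff_eq_zero_of_lt P (by omega), coeff_eq_zero_of_lt P (by omega)]
      ring
    · rw [coeff_eq_zero_of_natDegree_lt (by omega), coeff_eq_zero_of_lt P (by omega),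
        coeff_eq_zero_of_lt P (by omega), coeff_eq_zero_of_lt P (by omega)]
      ring
  have hzero := hP.map_mul_eq_zero_of_degree_lt hdeg
  simp only [mul_sub, map_sub, mul_left_comm (P n : R[X]), map_C_mul, hP.map_mul_self,
    hP.map_mul_of_ne (show n ≠ n + 2 by omega), hP.map_mul_of_ne (show n ≠ n + 1 by omega)]
    at hzero
  linear_combination hzero

lemma norm_succ (hP : IsSymmetricMonicOrthogonal L P h b) (n : ℕ) :
    h (n + 1) = b (n + 1) * h n := by
  have hright : L (P (n + 1) * (X * P n)) = h (n + 1) := by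
    rw [hP.X_mul, mul_add, map_add, hP.map_mul_self, mul_left_comm, map_C_mul,
      hP.map_mul_of_ne (by omega), mul_zero, add_zero]
  have hleft : L (X * P (n + 1) * P n) = b (n + 1) * h n := by
    rw [hP.X_mul, add_mul, map_add, hP.map_mul_of_ne (by omega), mul_assoc, map_C_mul,
      Nat.add_sub_cancel, hP.map_mul_self, zero_add]
  rw [← hright, ← hleft]
  congr 1
  ring

lemma map_sq_linear_combination (hP : IsSymmetricMonicOrthogonal L P h b) {i j k : ℕ}
    (hij : i ≠ j) (hik : i ≠ k) (hjk : j ≠ k) (c d : R) :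
    L ((P i + C c * P j + C d * P k) ^ 2) = h i + c ^ 2 * h j + d ^ 2 * h k := by
  have hexpand : (P i + C c * P j + C d * P k) ^ 2 =
      P i * P i + C (c ^ 2) * (P j * P j) + C (d ^ 2) * (P k * P k)
        + C (2 * c) * (P i * P j) + C (2 * d) * (P i * P k) + C (2 * c * d) * (P j * P k) := by
    simp only [C_mul, C_pow, C_ofNat]
    ring
  simp only [hexpand, map_add, map_C_mul, hP.map_mul_self, hP.map_mul_of_ne hij,
    hP.map_mul_of_ne hik, hP.map_mul_of_ne hjk, mul_zero, add_zero]

lemma map_X_mul_sq (hP : IsSymmetricMonicOrthogonal L P h b) (n : ℕ) :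
    L ((X * P (n + 1)) ^ 2) = (b (n + 1) + b (n + 2)) * h (n + 1) := by
  have hsq := hP.map_sq_linear_combination (show n + 2 ≠ n by omega) (show n + 2 ≠ n + 1 by omega)
    (show n ≠ n + 1 by omega) (b (n + 1)) 0
  rw [C_0, zero_mul, add_zero] at hsq
  rw [hP.X_mul, Nat.add_sub_cancel, hsq, hP.norm_succ (n + 1), hP.norm_succ n]
  ring

lemma X_sq_mul (hP : IsSymmetricMonicOrthogonal L P h b) (n : ℕ) :
    X ^ 2 * P (n + 1) = P (n + 3) + C (b (n + 1) + b (n + 2)) * P (n + 1)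
      + C (b (n + 1) * b n) * P (n - 1) := by
  have hsucc := hP.X_mul (n + 1)
  have hsucc₂ := hP.X_mul (n + 2)
  rw [Nat.add_sub_cancel] at hsucc
  rw [show n + 2 - 1 = n + 1 by omega] at hsucc₂
  rw [C_add, C_mul]
  linear_combination X * hsucc + hsucc₂ + C (b (n + 1)) * hP.X_mul n

lemma map_X_sq_mul_sq (hP : IsSymmetricMonicOrthogonal L P h b) (n : ℕ) :
    L ((X ^ 2 * P (n + 1)) ^ 2) = (b (n + 1) * b n + (b (n + 1) + b (n + 2)) ^ 2
      + b (n + 2) * b (n + 3)) * h (n + 1) := by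
  have hlower : (b (n + 1) * b n) ^ 2 * h (n - 1) = b (n + 1) * b n * h (n + 1) := by
    cases n with
    | zero => simp [hP.recurrence_zero]
    | succ n =>
      rw [hP.norm_succ (n + 1), hP.norm_succ n, Nat.add_sub_cancel]
      ring
  rw [hP.X_sq_mul, hP.map_sq_linear_combination (by omega) (by omega) (by omega), hlower,
    hP.norm_succ (n + 2), hP.norm_succ (n + 1)]
  ring

end IsSymmetricMonicOrthogonal

end OrthogonalPolynomials

section PearsonPair

variable {R : Type*} [CommRing R] {L : R[X] →ₗ[R] R} {P : Sequence R} {h b : ℕ → R}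

/-- The polynomial `σ = (1 - x²)(1 - k²x²)` of the Pearson equation `(σ w)' = 2 τ w`. -/
noncomputable def sigma (k2 : R) : R[X] := (1 - X ^ 2) * (1 - C k2 * X ^ 2)

/-- The polynomial `τ` of the Pearson equation `(σ w)' = 2 τ w` for the weight
`w = (1 - x²)^α (1 - k²x²)^β`. -/
noncomputable def tau (α β k2 : R) : R[X] :=
  -(C (α + 1) * X * (1 - C k2 * X ^ 2)) - C ((β + 1) * k2) * X * (1 - X ^ 2)

lemma coeff_pearsonOp_succ (α β k2 : R) (p : R[X]) (i : ℕ) :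
    (pearsonOp (sigma k2) (tau α β k2) p).coeff (i + 1) =
      (i + 2) * p.coeff (i + 2) - ((1 + k2) * i + α + 1 + (β + 1) * k2) * p.coeff i
        + k2 * (i + α + β) * (X ^ 2 * p).coeff i := by
  have hexpand : pearsonOp (sigma k2) (tau α β k2) p = derivative p
      - X * (C (1 + k2) * (X * derivative p) + C (α + 1 + (β + 1) * k2) * p)
      + X * (X ^ 2 * (C k2 * (X * derivative p) + C (k2 * (α + β + 2)) * p)) := by
    simp only [pearsonOp, sigma, tau, C_add, C_mul, C_1, C_ofNat]
    ring
  have hderiv (j : ℕ) : (X * derivative p).coeff j = j * p.coeff j := by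
    cases j with
    | zero => simp
    | succ j =>
      rw [coeff_X_mul, coeff_derivative]
      push_cast
      ring
  simp only [hexpand, coeff_add, coeff_sub, coeff_X_mul, coeff_derivative, coeff_X_pow_mul',
    coeff_C_mul, hderiv]
  split_ifs with hi
  · push_cast [Nat.cast_sub hi]
    ring
  · push_cast
    ring

lemma natDegree_pearsonOp_le (α β k2 : R) {p : R[X]} {n : ℕ} (hp : p.natDegree ≤ n) :
    (pearsonOp (sigma k2) (tau α β k2) p).natDegree ≤ n + 3 := by
  rw [natDegree_le_iff_coeff_eq_zero]
  intro j hj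
  obtain ⟨i, rfl⟩ : ∃ i, j = i + 1 := ⟨j - 1, by omega⟩
  have hcoeff {l : ℕ} (hl : n < l) : p.coeff l = 0 :=
    coeff_eq_zero_of_natDegree_lt (hp.trans_lt hl)
  rw [coeff_pearsonOp_succ, coeff_X_pow_mul', if_pos (by omega), hcoeff (by omega),
    hcoeff (by omega), hcoeff (by omega)]
  ring

lemma IsSymmetricMonicOrthogonal.map_mul_pearsonOp (hP : IsSymmetricMonicOrthogonal L P h b)
    (α β k2 : R) (n : ℕ) :
    L (P (n + 1) * pearsonOp (sigma k2) (tau α β k2) (P n)) =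
      (k2 * (n + α + β + 2) * (b n + b (n + 1) + b (n + 2)) - 2 * k2 * subleadingCoeff P n
        - ((1 + k2) * n + α + 1 + (β + 1) * k2)) * h (n + 1) := by
  have htop : (X ^ 2 * P n).coeff (n + 2) = 1 := by rw [coeff_X_pow_mul, hP.coeff_self]
  rw [hP.map_mul_of_natDegree_le (natDegree_pearsonOp_le α β k2 (P.natDegree_eq n).le),
    coeff_pearsonOp_succ, coeff_pearsonOp_succ, htop, hP.coeff_self,
    coeff_eq_zero_of_lt P (show n < n + 2 by omega),
    coeff_eq_zero_of_lt P (show n < n + 2 + 2 by omega), ← subleadingCoeff,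
    hP.subleadingCoeff_succ (n + 2), hP.subleadingCoeff_succ (n + 1), hP.subleadingCoeff_succ n]
  push_cast
  ring

lemma IsSymmetricMonicOrthogonal.map_sigma_mul (hP : IsSymmetricMonicOrthogonal L P h b)
    (k2 : R) (n : ℕ) :
    L (sigma k2 * (P (n + 1) * P (n + 1))) =
      (1 - (1 + k2) * (b (n + 1) + b (n + 2)) + k2 * (b (n + 1) * b n
        + (b (n + 1) + b (n + 2)) ^ 2 + b (n + 2) * b (n + 3))) * h (n + 1) := by
  have hexpand : sigma k2 * (P (n + 1) * P (n + 1)) = P (n + 1) * P (n + 1)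
      - C (1 + k2) * (X * P (n + 1)) ^ 2 + C k2 * (X ^ 2 * P (n + 1)) ^ 2 := by
    simp only [sigma, C_add, C_1]
    ring
  rw [hexpand, map_add, map_sub, map_C_mul, map_C_mul, hP.map_mul_self, hP.map_X_mul_sq,
    hP.map_X_sq_mul_sq]
  ring

lemma IsSymmetricMonicOrthogonal.map_mul_mul_self_of_isPearson
    (hP : IsSymmetricMonicOrthogonal L P h b) {σ τ : R[X]} (hL : IsPearson L σ τ) (n : ℕ) :
    L (σ * (P (n + 1) * P (n + 1))) = 2 * (b (n + 1) * L (P (n + 1) * pearsonOp σ τ (P n))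
      - L (P (n + 2) * pearsonOp σ τ (P (n + 1)))) := by
  rw [hL.map_mul_mul_self, hP.X_mul, Nat.add_sub_cancel, add_mul, map_add, mul_assoc, map_C_mul,
    hL.map_mul_pearsonOp_comm (P n)]
  ring

end PearsonPair

theorem IsSymmetricMonicOrthogonal.rees_equation {L : ℝ[X] →ₗ[ℝ] ℝ} {P : Sequence ℝ}
    {h b : ℕ → ℝ} (hP : IsSymmetricMonicOrthogonal L P h b) {α β k2 : ℝ}
    (hL : IsPearson L (sigma k2) (tau α β k2)) {n : ℕ} (hn : h (n + 1) ≠ 0) :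
    b (n + 1) * Caux α β k2 b (subleadingCoeff P) n =
      b (n + 2) * Caux α β k2 b (subleadingCoeff P) (n + 2) + 1 := by
  have hdiag := hP.map_mul_mul_self_of_isPearson hL n
  rw [hP.map_sigma_mul, hP.map_mul_pearsonOp, hP.map_mul_pearsonOp, hP.norm_succ (n + 1)] at hdiag
  refine mul_right_cancel₀ hn ?_
  simp only [Caux, hP.subleadingCoeff_succ] at hdiag ⊢
  push_cast at hdiag ⊢
  linear_combination -hdiag

section MomentFunctional

variable {w : ℝ → ℝ} {a c : ℝ}

/-- The linear functional `p ↦ ∫ p w` on polynomials attached to an integrable weight. -/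
noncomputable def momentFunctional (hw : IntervalIntegrable w volume a c) : ℝ[X] →ₗ[ℝ] ℝ where
  toFun p := ∫ x in a..c, p.eval x * w x
  map_add' p q := by
    rw [← intervalIntegral.integral_add (hw.continuousOn_mul p.continuous.continuousOn)
      (hw.continuousOn_mul q.continuous.continuousOn)]
    simp only [eval_add, add_mul]
  map_smul' r p := by
    simp only [eval_smul, smul_eq_mul, mul_assoc, RingHom.id_apply,
      intervalIntegral.integral_const_mul]

lemma momentFunctional_apply (hw : IntervalIntegrable w volume a c) (p : ℝ[X]) :
    momentFunctional hw p = ∫ x in a..c, p.eval x * w x :=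
  rfl

lemma momentFunctional_X_eq_zero_of_even (hw : IntervalIntegrable w volume (-a) a)
    (heven : w.Even) : momentFunctional hw X = 0 := by
  have hodd := intervalIntegral.integral_comp_neg (a := -a) (b := a) fun x => x * w x
  simp only [heven _, neg_mul, neg_neg, intervalIntegral.integral_neg] at hodd
  simp only [momentFunctional_apply, eval_X]
  linarith

lemma isPearson_momentFunctional (hac : a ≤ c) (hw : IntervalIntegrable w volume a c)
    {σ τ : ℝ[X]} (hcont : ContinuousOn (fun x => σ.eval x * w x) (Icc a c))
    (hderiv : ∀ x ∈ Ioo a c, HasDerivAt (fun x => σ.eval x * w x) (2 * τ.eval x * w x) x)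
    (ha : σ.eval a * w a = 0) (hc : σ.eval c * w c = 0) :
    IsPearson (momentFunctional hw) σ τ := by
  intro f
  rw [momentFunctional_apply, intervalIntegral.integral_eq_sub_of_hasDerivAt_of_le
    (f := fun x => f.eval x * (σ.eval x * w x)) hac (f.continuous.continuousOn.mul hcont) ?_
    (hw.continuousOn_mul (Polynomial.continuous _).continuousOn)]
  · rw [ha, hc, mul_zero, mul_zero, sub_zero]
  · intro x hx
    refine ((f.hasDerivAt x).mul (hderiv x hx)).congr_deriv ?_
    simp only [eval_add, eval_mul, eval_ofNat]
    ring

end MomentFunctional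

section Weight

variable {α β k2 x : ℝ}

/-- The weight `(1 - x²)^α (1 - k²x²)^β`. -/
noncomputable def weight (α β k2 x : ℝ) : ℝ := (1 - x ^ 2) ^ α * (1 - k2 * x ^ 2) ^ β

lemma even_weight (α β k2 : ℝ) : (weight α β k2).Even := fun x => by
  simp only [weight, neg_sq]

lemma one_sub_mul_sq_pos (hk2 : k2 < 1) (hx : x ∈ Icc (-1) 1) : 0 < 1 - k2 * x ^ 2 := by
  have hsq : x ^ 2 ≤ 1 := (sq_le_one_iff_abs_le_one x).mpr (abs_le.mpr hx)
  rcases le_total k2 0 with hk | hk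
  · linarith [mul_nonpos_of_nonpos_of_nonneg hk (sq_nonneg x)]
  · linarith [mul_le_of_le_one_right hk hsq]

lemma sigma_mul_weight (hα : -1 < α) (hk2 : k2 < 1) (hx : x ∈ Icc (-1) 1) :
    (sigma k2).eval x * weight α β k2 x = weight (α + 1) (β + 1) k2 x := by
  have hsq : 0 ≤ 1 - x ^ 2 := sub_nonneg.mpr ((sq_le_one_iff_abs_le_one x).mpr (abs_le.mpr hx))
  rw [weight, weight, Real.rpow_add_one' hsq (by linarith),
    Real.rpow_add_one (one_sub_mul_sq_pos hk2 hx).ne']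
  simp only [sigma, eval_mul, eval_sub, eval_one, eval_pow, eval_X, eval_C]
  ring

lemma hasDerivAt_weight_succ (hk2 : k2 < 1) (hx : x ∈ Ioo (-1) 1) :
    HasDerivAt (weight (α + 1) (β + 1) k2) (2 * (tau α β k2).eval x * weight α β k2 x) x := by
  have hsq : 0 < 1 - x ^ 2 := sub_pos.mpr ((sq_lt_one_iff_abs_lt_one x).mpr (abs_lt.mpr hx))
  have hksq := one_sub_mul_sq_pos hk2 (Ioo_subset_Icc_self hx)
  have hfst : HasDerivAt (fun x : ℝ => 1 - x ^ 2) (-(2 * x)) x := by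
    simpa using (hasDerivAt_pow 2 x).const_sub 1
  have hsnd : HasDerivAt (fun x : ℝ => 1 - k2 * x ^ 2) (-(k2 * (2 * x))) x := by
    simpa using ((hasDerivAt_pow 2 x).const_mul k2).const_sub 1
  refine ((hfst.rpow_const (p := α + 1) (Or.inl hsq.ne')).mul
    (hsnd.rpow_const (p := β + 1) (Or.inl hksq.ne'))).congr_deriv ?_
  simp only [weight, tau, add_sub_cancel_right, Real.rpow_add_one hsq.ne',
    Real.rpow_add_one hksq.ne', eval_sub, eval_neg, eval_mul, eval_C, eval_X, eval_one, eval_pow]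
  ring

lemma isPearson_weight (hα : -1 < α) (hk2 : k2 < 1)
    (hw : IntervalIntegrable (weight α β k2) volume (-1) 1) :
    IsPearson (momentFunctional hw) (sigma k2) (tau α β k2) := by
  have hσw : EqOn (fun x => (sigma k2).eval x * weight α β k2 x) (weight (α + 1) (β + 1) k2)
      (Icc (-1) 1) := fun x hx => sigma_mul_weight hα hk2 hx
  refine isPearson_momentFunctional (by norm_num) hw (ContinuousOn.congr ?_ hσw)
    (fun x hx => ?_) (by simp [sigma]) (by simp [sigma])
  · exact ContinuousOn.mul (ContinuousOn.rpow_const (by fun_prop) fun _ _ => .inr (by linarith))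
      (ContinuousOn.rpow_const (by fun_prop) fun x hx => .inl (one_sub_mul_sq_pos hk2 hx).ne')
  · exact (hasDerivAt_weight_succ hk2 hx).congr_of_eventuallyEq
      (hσw.eventuallyEq_of_mem (Icc_mem_nhds hx.1 hx.2))

end Weight

end ReesEquation

open ReesEquation Polynomial in
theorem stmt_2_general
    (α β k2 : ℝ) (hα : -1 < α) (hk2 : k2 < 1)
    (w : ℝ → ℝ)
    (hw : ∀ x : ℝ, w x = (1 - x ^ 2) ^ α * (1 - k2 * x ^ 2) ^ β)
    (P : ℕ → Polynomial ℝ)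
    (hPmonic : ∀ n, (P n).Monic)
    (hPdeg : ∀ n, (P n).natDegree = n)
    (h : ℕ → ℝ) (hpos : ∀ n, 0 < h n)
    (horth : ∀ m n : ℕ,
      (∫ x in (-1:ℝ)..1, (P m).eval x * (P n).eval x * w x)
        = if m = n then h n else 0)
    (b : ℕ → ℝ) (hb0 : b 0 = 0)
    (hrec : ∀ n : ℕ, 1 ≤ n →
      Polynomial.X * P n = P (n + 1) + Polynomial.C (b n) * P (n - 1))
    (p1 : ℕ → ℝ) (hp10 : p1 0 = 0) (hp11 : p1 1 = 0)
    (hp1 : ∀ n : ℕ, 2 ≤ n → p1 n = (P n).coeff (n - 2)) :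
    ∀ n : ℕ, 2 ≤ n →
      b (n - 1) * Caux α β k2 b p1 (n - 2)
        = b n * Caux α β k2 b p1 n + 1 := by
  obtain rfl : w = weight α β k2 := funext hw
  obtain rfl : p1 = subleadingCoeff P := funext fun
    | 0 => by rw [hp10, subleadingCoeff_zero]
    | 1 => by rw [hp11, subleadingCoeff_one]
    | n + 2 => by rw [hp1 _ (by omega), subleadingCoeff_add_two, Nat.add_sub_cancel]
  have hw_integrable : IntervalIntegrable (weight α β k2) volume (-1) 1 := by
    have hP0 : P 0 = 1 := (hPmonic 0).natDegree_eq_zero.mp (hPdeg 0)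
    refine intervalIntegral.intervalIntegrable_of_integral_ne_zero ?_
    simpa [hP0] using (horth 0 0).trans_ne (hpos 0).ne'
  have hmap (m n : ℕ) : momentFunctional hw_integrable (P m * P n) = if m = n then h n else 0 := by
    simpa only [momentFunctional_apply, eval_mul] using horth m n
  let S : Sequence ℝ := ⟨P, fun n => by rw [degree_eq_natDegree (hPmonic n).ne_zero, hPdeg]⟩
  have hS : IsSymmetricMonicOrthogonal (momentFunctional hw_integrable) S h b :=
    .of_map_X_eq_zero hPmonic hmap
      (momentFunctional_X_eq_zero_of_even hw_integrable (even_weight α β k2)) (hpos 0).ne' hb0 hrec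
  rintro (_ | _ | n) hn
  · omega
  · omega
  · exact hS.rees_equation (isPearson_weight hα hk2 hw_integrable) (hpos (n + 1)).ne'

/-- The generalized Rees difference equation
`β_{n−1}·C_{n−2} = β_n·C_n + 1` for all `n ≥ 2`. -/
theorem stmt_2
    (α β k2 : ℝ) (hα : -1 < α) (hk2 : k2 ∈ Set.Ioo (0:ℝ) 1)
    (w : ℝ → ℝ)
    (hw : ∀ x : ℝ, w x = (1 - x ^ 2) ^ α * (1 - k2 * x ^ 2) ^ β)
    (P : ℕ → Polynomial ℝ)
    (hPmonic : ∀ n, (P n).Monic)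
    (hPdeg : ∀ n, (P n).natDegree = n)
    (h : ℕ → ℝ) (hpos : ∀ n, 0 < h n)
    (horth : ∀ m n : ℕ,
      (∫ x in (-1:ℝ)..1, (P m).eval x * (P n).eval x * w x)
        = if m = n then h n else 0)
    (b : ℕ → ℝ) (hb0 : b 0 = 0)
    (hrec : ∀ n : ℕ, 1 ≤ n →
      Polynomial.X * P n = P (n + 1) + Polynomial.C (b n) * P (n - 1))
    (p1 : ℕ → ℝ) (hp10 : p1 0 = 0) (hp11 : p1 1 = 0)
    (hp1 : ∀ n : ℕ, 2 ≤ n → p1 n = (P n).coeff (n - 2)) :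
    ∀ n : ℕ, 2 ≤ n →
      b (n - 1) * Caux α β k2 b p1 (n - 2)
        = b n * Caux α β k2 b p1 n + 1 := by
  exact stmt_2_general α β k2 hα hk2.2 w hw P hPmonic hPdeg h hpos horth b hb0 hrec p1 hp10 hp11 hp1
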